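/- arXiv:math/0612245 — 8 statements merged into one kernel-verified Lean document; each statement's English description precedes it below -/
import Mathlib

section
/- Let λ be a cardinal with cf(λ) > ℵ₀, and let ℱ be a set of partial functions from λ to λ such that ⊠_{ℱ,λ} holds. Then the tree 𝒯_ℱ has no branch of length λ; that is, there is no strictly ⊆-increasing sequence ⟨f_α : α < λ⟩ of elements of 𝒯_ℱ. -/
/-!
The nodes of a branch `⟨f_α : α < λ⟩` have strictly increasing ordinals as domains, so
`α ⊆ Dom(f_α)` (`le_of_pDom_eq_Iio`), and the union `g` of the branch, which is given by
`g x = f_{x+1} x`, is total on `λ`.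
As `cf(λ) > ℵ₀`, a countable `u ⊆ λ` is bounded by some `β < λ`, hence
`g ↾ u = f_β ↾ u`, which is in `ℱ` because `f_β` is. By the locality clause of `⊠_{ℱ,λ}` this
puts `g` in `ℱ`, whereas no member of `ℱ` has domain `λ`.
-/

/-- The domain of a partial function on ordinals, represented as an `Option`-valued function. -/
def pDom (f : Ordinal → Option Ordinal) : Set Ordinal := {x | f x ≠ none}

/-- The range of a partial function on ordinals. -/
def pRan (f : Ordinal → Option Ordinal) : Set Ordinal := {y | ∃ x, f x = some y}

/-- `f` is a partial function from `λ` to `λ` (domain and range consist of ordinals `< λ`). -/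
def IsPartialFun (lam : Cardinal) (f : Ordinal → Option Ordinal) : Prop :=
  (∀ x ∈ pDom f, x < lam.ord) ∧ ∀ y ∈ pRan f, y < lam.ord

open Classical in
/-- The restriction `f ↾ u` of a partial function to a set `u`. -/
noncomputable def pRestrict (f : Ordinal → Option Ordinal) (u : Set Ordinal) :
    Ordinal → Option Ordinal :=
  fun x => if x ∈ u then f x else none

/-- Inclusion of partial functions (as graphs). -/
def pSub (f g : Ordinal → Option Ordinal) : Prop := ∀ x y, f x = some y → g x = some y

/-- The property `⊠_{ℱ,λ}`: `ℱ` is a set of partial functions from `λ` to `λ`, a partial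
function from `λ` to `λ` belongs to `ℱ` iff all of its countable restrictions do, and no
member of `ℱ` has domain all of `λ`. -/
def BoxF (lam : Cardinal) (F : Set (Ordinal → Option Ordinal)) : Prop :=
  (∀ f ∈ F, IsPartialFun lam f) ∧
  (∀ f, IsPartialFun lam f →
    (f ∈ F ↔ ∀ u : Set Ordinal, u.Countable → u ⊆ pDom f → pRestrict f u ∈ F)) ∧
  ∀ f ∈ F, pDom f ≠ Set.Iio lam.ord

/-- The nodes of the tree `𝒯_ℱ`: members of `ℱ` whose domain is an ordinal.  The tree order
is inclusion of partial functions. -/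
def TreeNodeF (F : Set (Ordinal → Option Ordinal)) (f : Ordinal → Option Ordinal) : Prop :=
  f ∈ F ∧ ∃ γ : Ordinal, pDom f = Set.Iio γ

/-- Inclusion between partial functions is equality once the larger has no larger domain. -/
theorem pSub.eq_of_pDom_subset {f g : Ordinal → Option Ordinal} (h : pSub f g)
    (hd : pDom g ⊆ pDom f) : f = g := by
  funext x
  cases hf : f x with
  | some y => exact (h x y hf).symm
  | none =>
    by_contra hg
    exact hd (show x ∈ pDom g from fun h' => hg h'.symm) hf

/-- The `α`-th term of a strictly increasing sequence of nodes has domain at least `α`. -/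
theorem le_of_pDom_eq_Iio {o : Ordinal} {f : Ordinal → Ordinal → Option Ordinal}
    (hdom : ∀ α < o, ∃ γ : Ordinal, pDom (f α) = Set.Iio γ)
    (hinc : ∀ α β : Ordinal, α < β → β < o → pSub (f α) (f β) ∧ f α ≠ f β)
    (α : Ordinal) (hα : α < o) (γ : Ordinal) (hγ : pDom (f α) = Set.Iio γ) : α ≤ γ := by
  induction α using WellFoundedLT.induction generalizing γ with
  | ind α ih =>
    by_contra! hlt
    -- If `γ < α`, then `f γ ⊆ f α` and already `γ ⊆ Dom (f γ)`, so `f γ = f α`.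
    obtain ⟨δ, hδ⟩ := hdom γ (hlt.trans hα)
    have hle := ih γ hlt (hlt.trans hα) δ hδ
    obtain ⟨hsub, hne⟩ := hinc γ α hlt hα
    refine hne (hsub.eq_of_pDom_subset ?_)
    rw [hγ, hδ]
    exact Set.Iio_subset_Iio hle

/-- A countable set of ordinals below an ordinal of uncountable cofinality is bounded in it. -/
theorem sSup_lt_of_countable {o : Ordinal.{u}} (ho : Cardinal.aleph0 < o.cof)
    {s : Set Ordinal.{u}} (hs : s.Countable) (hso : ∀ x ∈ s, x < o) : sSup s < o := by
  refine Ordinal.sSup_lt_of_lt_cof (hs.le_aleph0.trans_lt ?_) hso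
  rw [← Ordinal.lift_cof]
  exact Cardinal.aleph0_lt_lift.2 ho

/-- If `cf(λ) > ℵ₀` and `⊠_{ℱ,λ}` holds, then `𝒯_ℱ` has no branch of length `λ`: there is no
strictly `⊆`-increasing sequence `⟨f_α : α < λ⟩` of nodes of `𝒯_ℱ`. -/
theorem stmt0 (lam : Cardinal) (hcf : Cardinal.aleph0 < lam.ord.cof)
    (F : Set (Ordinal → Option Ordinal)) (hF : BoxF lam F) :
    ¬ ∃ f : Ordinal → Ordinal → Option Ordinal,
        (∀ α < lam.ord, TreeNodeF F (f α)) ∧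
        ∀ α β : Ordinal, α < β → β < lam.ord → pSub (f α) (f β) ∧ f α ≠ f β := by
  rintro ⟨f, hnode, hinc⟩
  obtain ⟨hpart, hloc, hmax⟩ := hF
  have hlim : Order.IsSuccLimit lam.ord :=
    Ordinal.one_lt_cof_iff.1 (Cardinal.one_lt_aleph0.trans hcf)
  have hdef : ∀ α < lam.ord, ∀ x < α, x ∈ pDom (f α) := by
    intro α hα x hx
    obtain ⟨γ, hγ⟩ := (hnode α hα).2
    rw [hγ]
    exact hx.trans_le (le_of_pDom_eq_Iio (fun β hβ => (hnode β hβ).2) hinc α hα γ hγ)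
  have hcompat : ∀ β < lam.ord, ∀ x < β, f (Order.succ x) x = f β x := by
    intro β hβ x hx
    obtain h | h := (Order.succ_le_of_lt hx).eq_or_lt
    · rw [h]
    · obtain ⟨y, hy⟩ := Option.ne_none_iff_exists'.1
        (hdef _ (hlim.succ_lt (hx.trans hβ)) x (Order.lt_succ x))
      rw [hy, (hinc _ _ h hβ).1 x y hy]
  classical
  let g : Ordinal → Option Ordinal := fun x => if x < lam.ord then f (Order.succ x) x else none
  have hg : ∀ x < lam.ord, g x = f (Order.succ x) x := fun x hx => if_pos hx
  have hg' : ∀ x, g x ≠ none → x < lam.ord := fun x hx => by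
    by_contra h
    exact hx (if_neg h)
  have hgdom : pDom g = Set.Iio lam.ord := by
    ext x
    refine ⟨hg' x, fun hx => ?_⟩
    change g x ≠ none
    rw [hg x hx]
    exact hdef _ (hlim.succ_lt hx) x (Order.lt_succ x)
  have hgpart : IsPartialFun lam g := by
    refine ⟨hg', ?_⟩
    rintro y ⟨x, hxy⟩
    have hx : x < lam.ord := hg' x (by simp [hxy])
    rw [hg x hx] at hxy
    exact (hpart _ (hnode _ (hlim.succ_lt hx)).1).2 y ⟨x, hxy⟩
  refine hmax g ((hloc g hgpart).2 fun u hu hug => ?_) hgdom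
  have hul : ∀ x ∈ u, x < lam.ord := fun x hx => hg' x (hug hx)
  have hβ : Order.succ (sSup u) < lam.ord := hlim.succ_lt (sSup_lt_of_countable hcf hu hul)
  have hlt : ∀ x ∈ u, x < Order.succ (sSup u) := fun x hx =>
    Order.lt_succ_of_le (le_csSup ⟨lam.ord, fun z hz => (hul z hz).le⟩ hx)
  have heq : pRestrict g u = pRestrict (f (Order.succ (sSup u))) u := by
    funext x
    by_cases hx : x ∈ u
    · simp only [pRestrict, if_pos hx]
      rw [hg x (hul x hx), hcompat _ hβ x (hlt x hx)]
    · simp only [pRestrict, if_neg hx]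
  rw [heq]
  have hmem := (hnode _ hβ).1
  exact (hloc _ (hpart _ hmem)).1 hmem u hu fun x hx => hdef _ hβ x (hlt x hx)
end

section
/- Let λ be an infinite cardinal and let (T, <ᵀ) be a tree of cardinality ≤ λ in which every chain has cardinality < λ. Then there exists a set ℱ of partial functions from λ to λ such that ⊠_{ℱ,λ} holds and (T, <ᵀ) order-embeds into (𝒯_ℱ, ⊊), i.e., there is an injection e : T → 𝒯_ℱ with x <ᵀ y if and only if e(x) ⊊ e(y). -/
/-- In a tree, the nodes below a given node are pairwise comparable. -/
lemma tree_comparable {T : Type u} [PartialOrder T]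
    (htree : ∀ x : T, IsWellOrder {y : T // y < x} fun a b => (a : T) < (b : T))
    {x y z : T} (hx : x ≤ z) (hy : y ≤ z) : x ≤ y ∨ y ≤ x := by
  rcases hx.eq_or_lt with rfl | hx
  · exact Or.inr hy
  rcases hy.eq_or_lt with rfl | hy
  · exact Or.inl hx.le
  have := htree z
  rcases trichotomous_of (fun a b : {y : T // y < z} => (a : T) < (b : T)) ⟨x, hx⟩ ⟨y, hy⟩
    with h | h | h
  · exact Or.inl h.le
  · exact Or.inl (congrArg Subtype.val h).le
  · exact Or.inr h.le

lemma tree_wellFounded {T : Type u} [PartialOrder T]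
    (htree : ∀ x : T, IsWellOrder {y : T // y < x} fun a b => (a : T) < (b : T)) :
    WellFoundedLT T := by
  refine ⟨⟨fun x => Acc.intro x fun y hy => ?_⟩⟩
  have key : ∀ a : {y : T // y < x}, Acc (· < ·) (a : T) := fun a => by
    refine (htree x).wf.induction (C := fun a => Acc (· < ·) (a : T)) a fun b ih => ?_
    exact Acc.intro _ fun w hw => ih ⟨w, hw.trans b.2⟩ hw
  exact key ⟨y, hy⟩

/-- The level of a node, as its rank with respect to `<`. -/
noncomputable def level {T : Type u} [PartialOrder T] [WellFoundedLT T] (x : T) : Ordinal.{u} :=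
  IsWellFounded.rank (· < ·) x

lemma level_strictMono {T : Type u} [PartialOrder T] [WellFoundedLT T] :
    StrictMono (level : T → Ordinal.{u}) :=
  fun _ _ h => IsWellFounded.rank_lt_of_rel h

/-- There is a predecessor on every smaller level. -/
lemma exists_level_eq {T : Type u} [PartialOrder T] [WellFoundedLT T] (x : T) :
    ∀ i ≤ level x, ∃ y ≤ x, level y = i := by
  induction x using WellFoundedLT.induction with
  | ind x ih =>
    intro i hi
    rcases hi.eq_or_lt with rfl | hi
    · exact ⟨x, le_rfl, rfl⟩
    -- Otherwise every `y < x` has level below `i`, so the rank of `x` is at most `i`.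
    by_contra! hne
    refine hi.not_ge ?_
    rw [level, IsWellFounded.rank_eq]
    refine Ordinal.iSup_le fun b => ?_
    rw [Order.succ_le_iff]
    by_contra! hb
    obtain ⟨y, hy, hyi⟩ := ih b.1 b.2 i hb
    exact hne y (hy.trans (le_of_lt b.2)) hyi

/-- Nodes of the same level with a common upper bound are equal. -/
lemma level_inj {T : Type u} [PartialOrder T] [WellFoundedLT T]
    {x y : T} (h : x ≤ y ∨ y ≤ x) (hl : level x = level y) : x = y := by
  rcases h with h | h
  · exact h.eq_of_not_lt fun h' => (level_strictMono h').ne hl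
  · exact (h.eq_of_not_lt fun h' => (level_strictMono h').ne hl.symm).symm

lemma card_le_of_levels {T : Type u} [PartialOrder T] [WellFoundedLT T]
    {C : Set T} {o : Ordinal.{u}} (h : ∀ i < o, ∃ x ∈ C, level x = i) :
    o.card ≤ Cardinal.mk C := by
  have hsub : Set.Iio o ⊆ level '' C := fun i hi => h i hi
  have h1 := Cardinal.mk_le_mk_of_subset hsub
  have h2 := Cardinal.mk_image_le_lift (f := (level : T → Ordinal.{u})) (s := C)
  rw [Cardinal.mk_Iio_ordinal] at h1
  rw [← Cardinal.lift_le.{u + 1}]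
  simpa using (Cardinal.lift_le.{u}.2 h1).trans h2

lemma level_lt_ord {T : Type u} [PartialOrder T] [WellFoundedLT T]
    (htree : ∀ x : T, IsWellOrder {y : T // y < x} fun a b => (a : T) < (b : T))
    {lam : Cardinal.{u}} (hchain : ∀ C : Set T, IsChain (· ≤ ·) C → Cardinal.mk C < lam)
    (x : T) : level x < lam.ord := by
  rw [Cardinal.lt_ord]
  refine (card_le_of_levels (C := Set.Iic x) fun i hi => exists_level_eq x i hi.le).trans_lt
    (hchain _ fun a ha b hb _ => tree_comparable htree ha hb)

open Classical in
/-- The branch below `x`, coded by `c`: at `i` its value is the code of a node `y ≤ x` of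
level `i` (unique in a tree), and it is undefined when there is none. -/
noncomputable def branchFun {T : Type u} [PartialOrder T] [WellFoundedLT T]
    (c : T → Ordinal.{u}) (x : T) (i : Ordinal.{u}) : Option Ordinal.{u} :=
  if h : ∃ y ≤ x, level y = i then some (c h.choose) else none

lemma branchFun_eq_some {T : Type u} [PartialOrder T] [WellFoundedLT T]
    (htree : ∀ x : T, IsWellOrder {y : T // y < x} fun a b => (a : T) < (b : T))
    {c : T → Ordinal.{u}} {x : T} {i a : Ordinal.{u}} :
    branchFun c x i = some a ↔ ∃ y ≤ x, level y = i ∧ c y = a := by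
  unfold branchFun
  split_ifs with h
  · have hs := h.choose_spec
    constructor
    · intro ha
      exact ⟨_, hs.1, hs.2, Option.some.inj ha⟩
    · rintro ⟨y, hy, hi, rfl⟩
      rw [level_inj (tree_comparable htree hs.1 hy) (hs.2.trans hi.symm)]
  · simp only [false_iff]
    rintro ⟨y, hy, hi, -⟩
    exact h ⟨y, hy, hi⟩

lemma branchFun_level {T : Type u} [PartialOrder T] [WellFoundedLT T]
    (htree : ∀ x : T, IsWellOrder {y : T // y < x} fun a b => (a : T) < (b : T))
    {c : T → Ordinal.{u}} (hc : Function.Injective c) {x y : T} :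
    branchFun c x (level y) = some (c y) ↔ y ≤ x := by
  rw [branchFun_eq_some htree]
  constructor
  · rintro ⟨z, hz, -, hzy⟩
    exact hc hzy ▸ hz
  · exact fun h => ⟨y, h, rfl, rfl⟩

lemma branchFun_pDom {T : Type u} [PartialOrder T] [WellFoundedLT T]
    (c : T → Ordinal.{u}) (x : T) : pDom (branchFun c x) = Set.Iio (Order.succ (level x)) := by
  ext i
  simp only [pDom, branchFun, Set.mem_ofPred_eq, Set.mem_Iio, Order.lt_succ_iff]
  constructor
  · intro h
    by_contra hi
    refine h (dif_neg ?_)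
    rintro ⟨y, hy, rfl⟩
    exact hi (level_strictMono.monotone hy)
  · intro h
    rw [dif_pos (exists_level_eq x i h)]
    exact Option.some_ne_none _

lemma pSub_branchFun {T : Type u} [PartialOrder T] [WellFoundedLT T]
    (htree : ∀ x : T, IsWellOrder {y : T // y < x} fun a b => (a : T) < (b : T))
    {c : T → Ordinal.{u}} (hc : Function.Injective c) {x y : T} :
    pSub (branchFun c x) (branchFun c y) ↔ x ≤ y := by
  constructor
  · intro h
    exact (branchFun_level htree hc).1 (h _ _ ((branchFun_level htree hc).2 le_rfl))
  · intro h i a hi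
    rw [branchFun_eq_some htree] at hi ⊢
    obtain ⟨z, hz, hzi⟩ := hi
    exact ⟨z, hz.trans h, hzi⟩

/-- The partial functions from `λ` to `λ` any two of whose pairs lie in a common coded branch. -/
def branchFamily {T : Type u} [PartialOrder T] [WellFoundedLT T]
    (lam : Cardinal.{u}) (c : T → Ordinal.{u}) : Set (Ordinal.{u} → Option Ordinal.{u}) :=
  {f | IsPartialFun lam f ∧ ∀ i j a b, f i = some a → f j = some b →
    ∃ x : T, branchFun c x i = some a ∧ branchFun c x j = some b}

lemma pRestrict_eq_some {f : Ordinal.{u} → Option Ordinal.{u}} {s : Set Ordinal.{u}}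
    {i a : Ordinal.{u}} : pRestrict f s i = some a ↔ i ∈ s ∧ f i = some a := by
  unfold pRestrict
  split_ifs with h <;> simp [h]

lemma boxF_branchFamily {T : Type u} [PartialOrder T] [WellFoundedLT T]
    (htree : ∀ x : T, IsWellOrder {y : T // y < x} fun a b => (a : T) < (b : T))
    {lam : Cardinal.{u}} (hchain : ∀ C : Set T, IsChain (· ≤ ·) C → Cardinal.mk C < lam)
    {c : T → Ordinal.{u}} (hc : Function.Injective c) : BoxF lam (branchFamily lam c) := by
  refine ⟨fun f hf => hf.1, fun f hf => ⟨fun h s _ _ => ⟨⟨?_, ?_⟩, ?_⟩, fun h => ⟨hf, ?_⟩⟩, ?_⟩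
  · intro i hi
    obtain ⟨a, ha⟩ := Option.ne_none_iff_exists'.1 hi
    exact hf.1 i (Option.ne_none_iff_exists'.2 ⟨a, (pRestrict_eq_some.1 ha).2⟩)
  · rintro a ⟨i, hi⟩
    exact hf.2 a ⟨i, (pRestrict_eq_some.1 hi).2⟩
  · intro i j a b hi hj
    exact h.2 i j a b (pRestrict_eq_some.1 hi).2 (pRestrict_eq_some.1 hj).2
  · intro i j a b hi hj
    refine (h {i, j} (Set.toFinite _).countable ?_).2 i j a b
      (pRestrict_eq_some.2 ⟨by simp, hi⟩) (pRestrict_eq_some.2 ⟨by simp, hj⟩)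
    rintro k (rfl | rfl)
    · simp [pDom, hi]
    · simp [pDom, hj]
  · intro f hf hdom
    -- The nodes coded by the values of `f` form a chain meeting every level below `lam.ord`.
    refine (hchain {x | f (level x) = some (c x)} ?_).not_ge ?_
    · intro x hx y hy _
      obtain ⟨z, hzx, hzy⟩ := hf.2 _ _ _ _ hx hy
      exact tree_comparable htree ((branchFun_level htree hc).1 hzx)
        ((branchFun_level htree hc).1 hzy)
    · rw [← Cardinal.card_ord lam]
      refine card_le_of_levels fun i hi => ?_
      have hi' : i ∈ pDom f := hdom ▸ hi
      obtain ⟨a, ha⟩ := Option.ne_none_iff_exists'.1 hi'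
      obtain ⟨z, hz, -⟩ := hf.2 i i a a ha ha
      obtain ⟨y, -, rfl, rfl⟩ := (branchFun_eq_some htree).1 hz
      exact ⟨y, ha, rfl⟩

/-- A set of cardinality at most `lam` injects into the ordinals below `lam.ord`. -/
lemma exists_code {T : Type u} {lam : Cardinal.{u}} (hcard : Cardinal.mk T ≤ lam) :
    ∃ c : T → Ordinal.{u}, Function.Injective c ∧ ∀ x, c x < lam.ord := by
  obtain ⟨r, _, hr⟩ := Cardinal.exists_ord_eq T
  refine ⟨fun x => Ordinal.typein r x, Ordinal.typein_injective r, fun x => ?_⟩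
  exact (hr ▸ Ordinal.typein_lt_type r x).trans_le (Cardinal.ord_le_ord.2 hcard)

/-- Every tree `T` of cardinality `≤ λ` (`λ` infinite) all of whose chains have cardinality
`< λ` order-embeds into `𝒯_ℱ` for some `ℱ` with `⊠_{ℱ,λ}`. -/
theorem stmt1 {T : Type u} [PartialOrder T]
    (htree : ∀ x : T, IsWellOrder {y : T // y < x} fun a b => (a : T) < (b : T))
    (lam : Cardinal.{u}) (hlam : Cardinal.aleph0 ≤ lam)
    (hcard : Cardinal.mk T ≤ lam)
    (hchain : ∀ C : Set T, IsChain (· ≤ ·) C → Cardinal.mk C < lam) :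
    ∃ F : Set (Ordinal.{u} → Option Ordinal.{u}), BoxF lam F ∧
      ∃ e : T → Ordinal.{u} → Option Ordinal.{u},
        Function.Injective e ∧ (∀ x : T, TreeNodeF F (e x)) ∧
        ∀ x y : T, x < y ↔ pSub (e x) (e y) ∧ e x ≠ e y := by
  have := tree_wellFounded htree
  obtain ⟨c, hc, hclt⟩ := exists_code hcard
  have hinj : Function.Injective (branchFun c) := fun x y h =>
    le_antisymm ((pSub_branchFun htree hc).1 (h ▸ fun _ _ h => h))
      ((pSub_branchFun htree hc).1 (h ▸ fun _ _ h => h))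
  refine ⟨branchFamily lam c, boxF_branchFamily htree hchain hc, branchFun c, hinj,
    fun x => ⟨⟨⟨fun i hi => ?_, ?_⟩, fun i j a b hi hj => ⟨x, hi, hj⟩⟩, _, branchFun_pDom c x⟩,
    fun x y => ?_⟩
  · rw [branchFun_pDom, Set.mem_Iio, Order.lt_succ_iff] at hi
    exact hi.trans_lt (level_lt_ord htree hchain x)
  · rintro a ⟨i, hi⟩
    obtain ⟨y, -, -, rfl⟩ := (branchFun_eq_some htree).1 hi
    exact hclt y
  · rw [pSub_branchFun htree hc, hinj.ne_iff, lt_iff_le_and_ne]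
end

section
/- Let λ be a regular cardinal and let g₁, g₂ ∈ 𝒢 with Dom(g₁) = γ₁ and Dom(g₂) = γ₂. Then g₁ ≤^𝒢 g₂ if and only if: (a) γ₁ ≤ γ₂ and g₁ ⊆ g₂, and (b) if γ₁ < γ₂ then g₂(γ₁) > g₂(x) for every x < γ₁. -/
/-!
Everything follows from one description of the ordinals below `h_g(x)` (`lt_hG_iff`): `z < h_g(x)`
exactly when `z < γ` and `g` stays bounded by `g x` on `[0, z]`. If `g₂(γ₁) ≤ g₂(x)` for some
`x < γ₁ < γ₂`, monotonicity bounds `g₂` by `g₂ x` on `[0, γ₁]`, so `h_{g₂}(x) > γ₁ ≥ h_{g₁}(x)`.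
Conversely, a strict jump of `g₂` at `γ₁` forces `h_{g₂}(x) ≤ γ₁`, and below `γ₁` the two functions
agree, so `h_{g₁}(x)` and `h_{g₂}(x)` have the same ordinals below them.
-/

/-- For `g ∈ 𝒢` with domain `γ`, the function `h_g : γ → γ+1`,
`h_g(x) = Min({y < γ : g(y) > g(x)} ∪ {γ})`. -/
noncomputable def hG (γ : Ordinal) (g : Ordinal → Ordinal) (x : Ordinal) : Ordinal :=
  sInf ({y : Ordinal | y < γ ∧ g x < g y} ∪ {γ})

/-- `g₁ ⊆ g₂` for `g₁, g₂` with domains `γ₁, γ₂`. -/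
def subG (γ₁ γ₂ : Ordinal) (g₁ g₂ : Ordinal → Ordinal) : Prop :=
  γ₁ ≤ γ₂ ∧ ∀ x < γ₁, g₁ x = g₂ x

/-- `g₁ ≤^𝒢 g₂`: `g₁ ⊆ g₂` and `h_{g₁} ⊆ h_{g₂}`. -/
def leG (γ₁ γ₂ : Ordinal) (g₁ g₂ : Ordinal → Ordinal) : Prop :=
  subG γ₁ γ₂ g₁ g₂ ∧ ∀ x < γ₁, hG γ₁ g₁ x = hG γ₂ g₂ x

/-- The ordinals below `h_g(x)` are those `z < γ` such that no value of `g` on `[0, z]`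
exceeds `g x`. -/
theorem lt_hG_iff (γ : Ordinal) (g : Ordinal → Ordinal) (x z : Ordinal) :
    z < hG γ g x ↔ z < γ ∧ ∀ y ≤ z, g y ≤ g x := by
  unfold hG
  constructor
  · intro h
    have hz : z < γ := h.trans_le (csInf_le' (Or.inr rfl))
    refine ⟨hz, fun y hy => ?_⟩
    by_contra! hlt
    have hy' : y ∈ {y : Ordinal | y < γ ∧ g x < g y} ∪ {γ} := Or.inl ⟨hy.trans_lt hz, hlt⟩
    exact absurd (csInf_le' hy') (hy.trans_lt h).not_ge
  · rintro ⟨hz, hle⟩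
    have hne : ({y : Ordinal | y < γ ∧ g x < g y} ∪ {γ}).Nonempty := ⟨γ, Or.inr rfl⟩
    rcases csInf_mem hne with h | h
    · by_contra! hinf
      exact absurd h.2 (hle _ hinf).not_gt
    · rw [Set.mem_singleton_iff.mp h]
      exact hz

/-- Characterization of `≤^𝒢`: `g₁ ≤^𝒢 g₂` iff (a) `γ₁ ≤ γ₂` and `g₁ ⊆ g₂`, and
(b) if `γ₁ < γ₂` then `g₂(γ₁) > g₂(x)` for every `x < γ₁`. -/
theorem stmt3 (lam : Cardinal) (hreg : lam.IsRegular)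
    (γ₁ γ₂ α₁ α₂ : Ordinal) (hγ₁ : γ₁ < lam.ord) (hγ₂ : γ₂ < lam.ord)
    (hα₁ : α₁ < lam.ord) (hα₂ : α₂ < lam.ord)
    (g₁ g₂ : Ordinal → Ordinal)
    (hval₁ : ∀ x < γ₁, g₁ x < α₁)
    (hmono₁ : ∀ x y : Ordinal, x ≤ y → y < γ₁ → g₁ x ≤ g₁ y)
    (hval₂ : ∀ x < γ₂, g₂ x < α₂)
    (hmono₂ : ∀ x y : Ordinal, x ≤ y → y < γ₂ → g₂ x ≤ g₂ y) :
    leG γ₁ γ₂ g₁ g₂ ↔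
      subG γ₁ γ₂ g₁ g₂ ∧ (γ₁ < γ₂ → ∀ x < γ₁, g₂ x < g₂ γ₁) := by
  constructor
  · rintro ⟨hsub, hh⟩
    refine ⟨hsub, fun hlt x hx => ?_⟩
    by_contra! hle
    have h₂ : γ₁ < hG γ₂ g₂ x :=
      (lt_hG_iff γ₂ g₂ x γ₁).2 ⟨hlt, fun y hy => (hmono₂ y γ₁ hy hlt).trans hle⟩
    rw [← hh x hx] at h₂
    exact lt_irrefl _ ((lt_hG_iff γ₁ g₁ x γ₁).1 h₂).1
  · rintro ⟨hsub, hjump⟩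
    refine ⟨hsub, fun x hx => eq_of_forall_lt_iff fun z => ?_⟩
    rw [lt_hG_iff, lt_hG_iff]
    constructor
    · rintro ⟨hz, hle⟩
      refine ⟨hz.trans_le hsub.1, fun y hy => ?_⟩
      rw [← hsub.2 y (hy.trans_lt hz), ← hsub.2 x hx]
      exact hle y hy
    · rintro ⟨hz, hle⟩
      -- If `γ₁ ≤ z`, the bound on `[0, z]` would contradict the jump at `γ₁`.
      have hz₁ : z < γ₁ := by
        by_contra! hge
        exact absurd (hjump (hge.trans_lt hz) x hx) (hle γ₁ hge).not_gt
      refine ⟨hz₁, fun y hy => ?_⟩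
      rw [hsub.2 y (hy.trans_lt hz₁), hsub.2 x hx]
      exact hle y hy
end

section
/- Let λ be a regular cardinal, α < λ, and g₁ ∈ 𝒢_α. If Dom(g₁) < γ < λ, then there exists g₂ ∈ 𝒢_{α+1} such that g₁ ≤^𝒢 g₂ and Dom(g₂) = γ. -/
/-- If `λ` is regular, `α < λ`, `g₁ ∈ 𝒢_α` has domain `γ₁`, and `γ₁ < γ < λ`, then there is
`g₂ ∈ 𝒢_{α+1}` with domain `γ` such that `g₁ ≤^𝒢 g₂`. -/
theorem stmt4 (lam : Cardinal) (hreg : lam.IsRegular)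
    (α γ₁ γ : Ordinal) (hα : α < lam.ord) (hγ₁γ : γ₁ < γ) (hγ : γ < lam.ord)
    (g₁ : Ordinal → Ordinal) (hval₁ : ∀ x < γ₁, g₁ x < α)
    (hmono₁ : ∀ x y : Ordinal, x ≤ y → y < γ₁ → g₁ x ≤ g₁ y) :
    α + 1 < lam.ord ∧
    ∃ g₂ : Ordinal → Ordinal,
      (∀ x < γ, g₂ x < α + 1) ∧
      (∀ x y : Ordinal, x ≤ y → y < γ → g₂ x ≤ g₂ y) ∧
      leG γ₁ γ g₁ g₂ := by
  refine ⟨(Cardinal.isSuccLimit_ord hreg.aleph0_le).add_one_lt hα,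
    fun x => if x < γ₁ then g₁ x else α, ?_, ?_, ⟨hγ₁γ.le, ?_⟩, ?_⟩
  · intro x _
    rw [Order.lt_add_one_iff]
    dsimp only
    split_ifs with h
    · exact (hval₁ x h).le
    · exact le_rfl
  · intro x y hxy _
    dsimp only
    split_ifs with hx hy hy
    · exact hmono₁ x y hxy hy
    · exact (hval₁ x hx).le
    · exact absurd (hxy.trans_lt hy) hx
    · exact le_rfl
  · intro x hx
    simp [hx]
  · intro x hx
    unfold hG
    apply le_antisymm
    · refine le_csInf ⟨γ, Or.inr rfl⟩ ?_
      rintro y hy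
      rcases lt_or_ge y γ₁ with h | h
      · apply csInf_le'
        rcases hy with hy | rfl
        · left
          refine ⟨h, ?_⟩
          simpa [hx, h] using hy.2
        · exact absurd h hγ₁γ.not_gt
      · exact le_trans (csInf_le' (Or.inr rfl)) h
    · refine le_csInf ⟨γ₁, Or.inr rfl⟩ ?_
      rintro y (⟨hy, hlt⟩ | rfl)
      · exact csInf_le' (Or.inl ⟨hy.trans hγ₁γ, by simpa [hx, hy] using hlt⟩)
      -- The old default value `γ₁` is now attained: `g₂ γ₁ = α > g₁ x`.
      · exact csInf_le' (Or.inl ⟨hγ₁γ, by simpa [hx] using hval₁ x hx⟩)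
end

section
/- Let λ be a regular cardinal and δ < λ. Suppose ⟨g_α : α < δ⟩ is a sequence with g_α ∈ 𝒢_α for every α < δ, and β < α < δ implies g_β ≤^𝒢 g_α. Then g = ⋃_{α<δ} g_α satisfies g ∈ 𝒢_δ and g_α ≤^𝒢 g for every α < δ. -/
theorem hG_mem (γ : Ordinal) (g : Ordinal → Ordinal) (x : Ordinal) :
    (hG γ g x < γ ∧ g x < g (hG γ g x)) ∨ hG γ g x = γ :=
  csInf_mem (s := {y : Ordinal | y < γ ∧ g x < g y} ∪ {γ}) ⟨γ, Or.inr rfl⟩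

theorem hG_le (γ : Ordinal) (g : Ordinal → Ordinal) (x : Ordinal) : hG γ g x ≤ γ :=
  csInf_le' (Or.inr rfl)

theorem hG_le_of_lt {γ : Ordinal} {g : Ordinal → Ordinal} {x y : Ordinal} (hy : y < γ)
    (h : g x < g y) : hG γ g x ≤ y :=
  csInf_le' (Or.inl ⟨hy, h⟩)

/-- When the first jump of `g` above `g x` occurs inside the domain `γ`, it is also the first jump
of any extension of `g` to a larger domain `Γ`. -/
theorem hG_eq_of_extend {γ Γ : Ordinal} {g G : Ordinal → Ordinal} (hΓ : γ ≤ Γ)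
    (hG' : ∀ x < γ, G x = g x) {x : Ordinal} (hx : x < γ) (h : hG γ g x < γ) :
    hG γ g x = hG Γ G x := by
  have hjump : g x < g (hG γ g x) := by
    rcases hG_mem γ g x with h1 | h1
    · exact h1.2
    · exact absurd h1 h.ne
  apply le_antisymm
  · by_contra! hlt
    rcases hG_mem Γ G x with h1 | h1
    · have hy : hG Γ G x < γ := hlt.trans h
      have := h1.2
      rw [hG' _ hx, hG' _ hy] at this
      exact (hG_le_of_lt hy this).not_gt hlt
    · rw [h1] at hlt
      exact (hlt.trans h).not_ge hΓ
  · refine hG_le_of_lt (h.trans_le hΓ) ?_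
    rwa [hG' _ hx, hG' _ h]

theorem hG_congr {γ : Ordinal} {g G : Ordinal → Ordinal} (hG' : ∀ x < γ, G x = g x)
    {x : Ordinal} (hx : x < γ) : hG γ g x = hG γ G x := by
  unfold hG
  congr 2
  ext y
  simp only [Set.mem_ofPred_eq]
  refine and_congr_right fun hy => ?_
  rw [hG' _ hx, hG' _ hy]

/-- If `λ` is regular, `δ < λ`, and `⟨g_α : α < δ⟩` is a `≤^𝒢`-increasing sequence with
`g_α ∈ 𝒢_α` (domain `γ_α`), then the union `G = ⋃_{α<δ} g_α` (a function with domain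
`sup_{α<δ} γ_α` agreeing with each `g_α`) lies in `𝒢_δ` and `g_α ≤^𝒢 G` for all `α < δ`. -/
theorem stmt5 (lam : Cardinal) (hreg : lam.IsRegular)
    (δ : Ordinal) (hδ : δ < lam.ord)
    (γ : Ordinal → Ordinal) (g : Ordinal → Ordinal → Ordinal)
    (hmem : ∀ α < δ, γ α < lam.ord ∧ (∀ x < γ α, g α x < α) ∧
      ∀ x y : Ordinal, x ≤ y → y < γ α → g α x ≤ g α y)
    (hinc : ∀ β α : Ordinal, β < α → α < δ → leG (γ β) (γ α) (g β) (g α)) :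
    ∃ G : Ordinal → Ordinal,
      (∀ α < δ, ∀ x < γ α, G x = g α x) ∧
      sSup (γ '' Set.Iio δ) < lam.ord ∧
      (∀ x < sSup (γ '' Set.Iio δ), G x < δ) ∧
      (∀ x y : Ordinal, x ≤ y → y < sSup (γ '' Set.Iio δ) → G x ≤ G y) ∧
      ∀ α < δ, leG (γ α) (sSup (γ '' Set.Iio δ)) (g α) G := by
  classical
  have hcompat : ∀ α < δ, ∀ β < δ, ∀ x, x < γ α → x < γ β → g α x = g β x := by
    intro α hα β hβ x hxα hxβ
    rcases lt_trichotomy α β with h | h | h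
    · exact (hinc α β h hβ).1.2 x hxα
    · rw [h]
    · exact ((hinc β α h hα).1.2 x hxβ).symm
  set Γ := sSup (γ '' Set.Iio δ) with hΓdef
  have hle : ∀ α < δ, γ α ≤ Γ := fun α hα =>
    le_csSup Ordinal.bddAbove_of_small (Set.mem_image_of_mem γ hα)
  have hex : ∀ x < Γ, ∃ α < δ, x < γ α := by
    intro x hx
    by_contra! hcon
    refine hx.not_ge (csSup_le' ?_)
    rintro _ ⟨α, hα, rfl⟩
    exact hcon α hα
  have hΓ : Γ < lam.ord := by
    refine Ordinal.sSup_lt_of_lt_cof ?_ ?_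
    · refine Cardinal.mk_image_le.trans_lt ?_
      rw [Cardinal.mk_Iio_ordinal, ← Ordinal.lift_cof, hreg.cof_ord, Cardinal.lift_lt]
      exact Cardinal.lt_ord.1 hδ
    · rintro _ ⟨α, hα, rfl⟩
      exact (hmem α hα).1
  -- Off the union of the domains the value `0` is immaterial.
  let G : Ordinal → Ordinal := fun x =>
    if h : ∃ α < δ, x < γ α then g h.choose x else 0
  have hG' : ∀ α < δ, ∀ x < γ α, G x = g α x := by
    intro α hα x hx
    have h : ∃ α < δ, x < γ α := ⟨α, hα, hx⟩
    simp only [G, dif_pos h]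
    exact hcompat _ h.choose_spec.1 _ hα x h.choose_spec.2 hx
  refine ⟨G, hG', hΓ, ?_, ?_, ?_⟩
  · intro x hx
    obtain ⟨α, hα, hxα⟩ := hex x hx
    rw [hG' α hα x hxα]
    exact ((hmem α hα).2.1 x hxα).trans hα
  · intro x y hxy hy
    obtain ⟨α, hα, hyα⟩ := hex y hy
    rw [hG' α hα x (hxy.trans_lt hyα), hG' α hα y hyα]
    exact (hmem α hα).2.2 x y hxy hyα
  · intro α hα
    refine ⟨⟨hle α hα, fun x hx => (hG' α hα x hx).symm⟩, fun x hx => ?_⟩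
    rcases (hle α hα).eq_or_lt with heq | hlt
    · rw [← heq]
      exact hG_congr (hG' α hα) hx
    · obtain ⟨β, hβ, hαβ⟩ := hex _ hlt
      have hlt' : α < β := by
        by_contra! hba
        rcases hba.eq_or_lt with h | h
        · rw [h] at hαβ
          exact hαβ.false
        · exact hαβ.not_ge (hinc β α h hα).1.1
      have hh := (hinc α β hlt' hβ).2 x hx
      rw [hh]
      refine hG_eq_of_extend (hle β hβ) (hG' β hβ) (hx.trans hαβ) ?_
      rw [← hh]
      exact (hG_le _ _ _).trans_lt hαβ
end

section
/- Let λ be an infinite regular cardinal and let ℱ be a set of partial functions from λ to λ such that ⊠_{ℱ,λ} holds. Then there do not exist functions g, h : λ → λ and ζ ∈ ℱ such that: g and h are weakly increasing; h(x) > x for every x < λ; g(x) = g(y) implies h(x) = h(y); and every ordinal below sup{g(x) : x < λ} belongs to Dom(ζ). -/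
open Classical in
/-- A map `g : λ → λ` through which some strictly inflationary `h : λ → λ` factors is unbounded
in `λ`, for `λ` regular. -/
theorem exists_lt_of_factors.{u} {lam : Cardinal.{u}} (hreg : lam.IsRegular) {g h : Ordinal.{u} → Ordinal.{u}}
    (hh : ∀ x < lam.ord, h x < lam.ord) (hinfl : ∀ x < lam.ord, x < h x)
    (hgh : ∀ x y : Ordinal, x < lam.ord → y < lam.ord → g x = g y → h x = h y)
    {o : Ordinal.{u}} (ho : o < lam.ord) : ∃ x < lam.ord, o < g x := by
  by_contra! hle
  have hfac : ∃ φ : Ordinal → Ordinal, ∀ x < lam.ord, φ (g x) = h x := by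
    refine ⟨fun v => if hv : ∃ x < lam.ord, g x = v then h hv.choose else 0, fun x hx => ?_⟩
    have hv : ∃ y < lam.ord, g y = g x := ⟨x, hx, rfl⟩
    simp only [dif_pos hv]
    exact hgh _ _ hv.choose_spec.1 hx hv.choose_spec.2
  obtain ⟨φ, hφ⟩ := hfac
  have hsub : h '' Set.Iio lam.ord ⊆ φ '' Set.Iio (o + 1) := by
    rintro _ ⟨x, hx, rfl⟩
    exact ⟨g x, Order.lt_add_one_iff.2 (hle x hx), hφ x hx⟩
  have ho1 : o + 1 < lam.ord := (Cardinal.isSuccLimit_ord hreg.aleph0_le).add_one_lt ho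
  have hcard : Cardinal.mk (h '' Set.Iio lam.ord) < (Ordinal.lift.{u + 1} lam.ord).cof := by
    refine (Cardinal.mk_le_mk_of_subset hsub).trans_lt (Cardinal.mk_image_le.trans_lt ?_)
    rw [Cardinal.mk_Iio_ordinal, ← Ordinal.lift_cof, hreg.cof_ord, Cardinal.lift_lt]
    exact Cardinal.lt_ord.1 ho1
  have hall : ∀ i ∈ h '' Set.Iio lam.ord, i < lam.ord := by
    rintro _ ⟨x, hx, rfl⟩
    exact hh x hx
  have hc := Ordinal.sSup_lt_of_lt_cof hcard hall
  exact (hinfl _ hc).not_ge (le_csSup ⟨lam.ord, fun i hi => (hall i hi).le⟩ ⟨_, hc, rfl⟩)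

/-- If `λ` is an infinite regular cardinal and `⊠_{ℱ,λ}` holds, then there are no
`g, h : λ → λ` and `ζ ∈ ℱ` such that `g, h` are weakly increasing, `h(x) > x`,
`g(x) = g(y) → h(x) = h(y)`, and every ordinal below `sup {g(x) : x < λ}` lies in
`Dom(ζ)`. -/
theorem stmt7 (lam : Cardinal) (hreg : lam.IsRegular)
    (F : Set (Ordinal → Option Ordinal)) (hF : BoxF lam F) :
    ¬ ∃ (g h : Ordinal → Ordinal) (ζ : Ordinal → Option Ordinal),
        ζ ∈ F ∧
        (∀ x < lam.ord, g x < lam.ord ∧ h x < lam.ord) ∧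
        (∀ x y : Ordinal, x ≤ y → y < lam.ord → g x ≤ g y ∧ h x ≤ h y) ∧
        (∀ x < lam.ord, x < h x) ∧
        (∀ x y : Ordinal, x < lam.ord → y < lam.ord → g x = g y → h x = h y) ∧
        ∀ o < sSup (g '' Set.Iio lam.ord), o ∈ pDom ζ := by
  rintro ⟨g, h, ζ, hζ, hlt, -, hinfl, hgh, hdom⟩
  refine hF.2.2 ζ hζ (Set.Subset.antisymm (hF.1 ζ hζ).1 fun o ho => ?_)
  obtain ⟨x, hx, hox⟩ := exists_lt_of_factors hreg (fun x hx => (hlt x hx).2) hinfl hgh ho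
  refine hdom o (hox.trans_le (le_csSup ⟨lam.ord, ?_⟩ ⟨x, hx, rfl⟩))
  rintro _ ⟨y, hy, rfl⟩
  exact (hlt y hy).1.le
end

section
/- Let λ be a cardinal with λ ≥ ℶ_ω. Assume there exist a regular cardinal κ < ℶ_ω and a family 𝒫 of subsets of λ, each of cardinality < ℶ_ω, with |𝒫| = λ, such that for every A ⊆ λ with |A| = ℶ_ω there are ε < κ and sets A_i ∈ 𝒫 (i < ε) with A = ⋃_{i<ε} A_i. Then there exists a family 𝒫* of countably infinite subsets of λ with |𝒫*| = λ such that every A ⊆ λ with |A| = ℶ_ω has a subset B ∈ 𝒫*. -/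
/-! Let `Q` consist of all countably infinite subsets of members of `P`, together with `λ` pairwise
disjoint countably infinite sets, added only to make `Q` have at least `λ` members. Since `ℶ_ω` is a
strong limit, each member of `P` has fewer than `ℶ_ω ≤ λ` subsets, so `#Q = λ`. A set `A` of
cardinality `ℶ_ω` cannot be a union of fewer than `κ` finite sets, since such a union has
cardinality at most `κ < ℶ_ω`; so one of the members of `P` covering `A` is infinite, and any
countably infinite subset of that member is a member of `Q` contained in `A`. -/


open Cardinal

/-- A step in the RGCH argument: if `λ ≥ ℶ_ω` (here `X` is a set of cardinality `λ`,
standing for the set of ordinals below `λ`) and there are a regular `κ < ℶ_ω` and a family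
`𝒫` of `λ` many subsets of `X`, each of cardinality `< ℶ_ω`, such that every `A ⊆ X` of
cardinality `ℶ_ω` is the union of fewer than `κ` members of `𝒫`, then there is a family
`𝒫*` of `λ` many countably infinite subsets of `X` such that every `A ⊆ X` of cardinality
`ℶ_ω` contains a member of `𝒫*`. -/
theorem stmt13 {X : Type u} (lam : Cardinal.{u}) (hX : #X = lam)
    (hlam : beth Ordinal.omega0 ≤ lam)
    (κ : Cardinal.{u}) (hκreg : κ.IsRegular) (hκ : κ < beth Ordinal.omega0)
    (P : Set (Set X)) (hPcard : #P = lam)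
    (hPsmall : ∀ A ∈ P, #A < beth Ordinal.omega0)
    (hcover : ∀ A : Set X, #A = beth Ordinal.omega0 →
      ∃ ε < κ.ord, ∃ As : Ordinal → Set X,
        (∀ i < ε, As i ∈ P) ∧ A = ⋃ i ∈ Set.Iio ε, As i) :
    ∃ Q : Set (Set X), #Q = lam ∧
      (∀ B ∈ Q, B.Countable ∧ B.Infinite) ∧
      ∀ A : Set X, #A = beth Ordinal.omega0 → ∃ B ∈ Q, B ⊆ A := by
  have hlim : IsStrongLimit (beth.{u} Ordinal.omega0) :=
    isStrongLimit_beth.2 Ordinal.isSuccLimit_omega0.isSuccPrelimit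
  have hlam0 : ℵ₀ ≤ lam := hlim.aleph0_le.trans hlam
  have hXℕ : #(X × ULift.{u} ℕ) = #X := by
    simpa [hX] using mul_eq_left hlam0 hlam0 aleph0_ne_zero
  obtain ⟨e⟩ := Cardinal.eq.1 hXℕ
  -- The images of the fibres `{x} × ℕ` under a bijection `X × ℕ ≃ X` are the padding sets.
  let F : X → Set X := fun x => Set.range fun n : ULift.{u} ℕ => e (x, n)
  have hFinj : Function.Injective F := by
    intro x y hxy
    have hx : e (x, ⟨0⟩) ∈ F y := hxy ▸ ⟨⟨0⟩, rfl⟩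
    obtain ⟨n, hn⟩ := hx
    exact (congrArg Prod.fst (e.injective hn)).symm
  let Q₀ : Set (Set X) := {B | (B.Countable ∧ B.Infinite) ∧ ∃ A ∈ P, B ⊆ A}
  have hQ₀ : #Q₀ ≤ lam := by
    have hsub : Q₀ ⊆ ⋃ A : P, 𝒫 (A : Set X) := by
      rintro B ⟨-, A, hA, hBA⟩
      exact Set.mem_iUnion.2 ⟨⟨A, hA⟩, hBA⟩
    refine (mk_le_mk_of_subset hsub).trans ((mk_iUnion_le _).trans ?_)
    rw [hPcard]
    refine (mul_le_mul_right (ciSup_le' fun A : P => ?_) lam).trans (mul_eq_self hlam0).le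
    rw [mk_powerset]
    exact (hlim.isStrongPrelimit (hPsmall A A.2)).le.trans hlam
  refine ⟨Q₀ ∪ Set.range F, le_antisymm ?_ ?_, ?_, ?_⟩
  · refine (mk_union_le _ _).trans ?_
    rw [mk_range_eq F hFinj, hX]
    exact (add_le_add_left hQ₀ lam).trans (add_eq_self hlam0).le
  · rw [← hX, ← mk_range_eq F hFinj]
    exact mk_le_mk_of_subset Set.subset_union_right
  · rintro B (hB | ⟨x, rfl⟩)
    · exact hB.1
    · refine ⟨Set.countable_range _, Set.infinite_range_of_injective fun m n hmn => ?_⟩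
      exact congrArg Prod.snd (e.injective hmn)
  · intro A hA
    obtain ⟨ε, hε, As, hAs, rfl⟩ := hcover A hA
    have hinf : ∃ i < ε, (As i).Infinite := by
      by_contra! hfin
      refine absurd hA (ne_of_lt (lt_of_le_of_lt ?_ hκ))
      -- Reindex by `ε.ToType`, since `Set.Iio ε` lives in a higher universe.
      have hre : ⋃ i ∈ Set.Iio ε, As i = ⋃ t : ε.ToType, As (Ordinal.ToType.mk.symm t) := by
        ext x
        simp only [Set.mem_iUnion, Set.mem_Iio, exists_prop]
        constructor
        · rintro ⟨i, hi, hx⟩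
          exact ⟨Ordinal.ToType.mk ⟨i, hi⟩, by simpa using hx⟩
        · rintro ⟨t, hx⟩
          exact ⟨_, (Ordinal.ToType.mk.symm t).2, hx⟩
      rw [hre]
      refine (mk_iUnion_le _).trans ?_
      have hε' : #ε.ToType ≤ κ := by
        rw [mk_toType]
        exact (lt_ord.1 hε).le
      refine (mul_le_mul' hε' (ciSup_le' fun t => ?_)).trans (mul_eq_self hκreg.aleph0_le).le
      have := hfin _ (Set.mem_Iio.1 (Ordinal.ToType.mk.symm t).2)
      exact (lt_aleph0_iff_set_finite.2 this).le.trans hκreg.aleph0_le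
    obtain ⟨i, hi, hinf⟩ := hinf
    let g := hinf.natEmbedding
    have hBs : Set.range (fun n => (g n : X)) ⊆ As i := by
      rintro _ ⟨n, rfl⟩
      exact (g n).2
    refine ⟨_, Or.inl ⟨⟨Set.countable_range _, Set.infinite_range_of_injective
      (Subtype.val_injective.comp g.injective)⟩, As i, hAs i hi, hBs⟩, ?_⟩
    exact hBs.trans (Set.subset_biUnion_of_mem (u := As) hi)
end

section
/- Let A and B be sets (types) and R ⊆ A × B a relation. Let K be the subgroup of G_A × G_B generated by {(e_a, e_b) : (a, b) ∈ R}. Suppose (c, c') ∈ K, b₀ lies in the support of c', and every a ∈ A with (a, b₀) ∈ R satisfies (a, b) ∉ R for every b ≠ b₀. Then there exists a in the support of c with (a, b₀) ∈ R. -/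
/-! The `b₀`-coordinate of `c'` can be read off from `c`: let `φ : G_A → ℤ/2ℤ` add up the
coordinates `c a` with `R a b₀`. On a generator `(e_a, e_b)` the hypothesis on `b₀` says exactly
that `R a b₀` holds iff `b = b₀`, so `φ c = c' b₀` on generators and hence on all of `K`.
As `c' b₀ ≠ 0`, some summand of `φ c` is nonzero. -/


/-- Let `G_X = ⊕_{x ∈ X} ℤ/2ℤ` (finitely supported functions `X →₀ ZMod 2`, with basis
`e_x = Finsupp.single x 1`), `R` a relation between `A` and `B`, and `K ≤ G_A × G_B` the
subgroup generated by `{(e_a, e_b) : R a b}`.  If `(c, c') ∈ K`, `b₀` lies in the support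
of `c'`, and every `a` related to `b₀` is related to no other `b`, then some `a` in the
support of `c` satisfies `R a b₀`. -/
theorem stmt17 {A B : Type*} (R : A → B → Prop)
    (c : A →₀ ZMod 2) (c' : B →₀ ZMod 2) (b₀ : B)
    (hmem : (c, c') ∈ AddSubgroup.closure
      {p : (A →₀ ZMod 2) × (B →₀ ZMod 2) |
        ∃ a b, R a b ∧ p = (Finsupp.single a 1, Finsupp.single b 1)})
    (hb₀ : b₀ ∈ c'.support)
    (huniq : ∀ a : A, R a b₀ → ∀ b : B, b ≠ b₀ → ¬ R a b) :
    ∃ a ∈ c.support, R a b₀ := by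
  classical
  let φ : (A →₀ ZMod 2) →+ ZMod 2 :=
    Finsupp.liftAddHom fun a => if R a b₀ then AddMonoidHom.id (ZMod 2) else 0
  have key : ∀ p ∈ AddSubgroup.closure
      {p : (A →₀ ZMod 2) × (B →₀ ZMod 2) |
        ∃ a b, R a b ∧ p = (Finsupp.single a 1, Finsupp.single b 1)}, φ p.1 = p.2 b₀ := by
    intro p hp
    induction hp using AddSubgroup.closure_induction with
    | mem p hp =>
      obtain ⟨a, b, hab, rfl⟩ := hp
      by_cases hb : b = b₀
      · subst hb
        simp [φ, hab]
      · have ha : ¬ R a b₀ := fun h => huniq a h b hb hab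
        simp [φ, ha, hb]
    | zero => simp
    | add p q _ _ hp hq => simp [hp, hq]
    | neg p _ hp => simp [hp]
  by_contra! hc
  have hzero : φ c = 0 := by
    rw [Finsupp.liftAddHom_apply]
    refine Finset.sum_eq_zero fun a ha => ?_
    simp [hc a ha]
  exact Finsupp.mem_support_iff.mp hb₀ ((key _ hmem).symm.trans hzero)
end
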